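/- Let n and l be nonnegative integers, and for each fixed-point-free involution τ of {1,…,2n} let v_τ ∈ (ℂ^l)^{⊗2n} be the tensor v_τ = Σ_i e_{i(1)}⊗e_{i(2)}⊗⋯⊗e_{i(2n)}, the sum over all functions i : {1,…,2n} → {1,…,l} with i∘τ = i. Then the family { v_τ : τ a fixed-point-free involution of {1,…,2n} with L(τ) ≤ l } is a basis of the subspace F_{2n}(O(l)) = { v ∈ (ℂ^l)^{⊗2n} : U^{⊗2n} v = v for every l×l real orthogonal matrix U (regarded as a complex matrix) }. -/

import Mathlib

open scoped TensorProduct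

noncomputable section

/-- `lisLE π l` means the longest increasing subsequence of the permutation `π`
has length at most `l`. -/
def lisLE {N : ℕ} (π : Equiv.Perm (Fin N)) (l : ℕ) : Prop :=
  ∀ (k : ℕ) (f : Fin k → Fin N), StrictMono f → StrictMono (fun i => π (f i)) → k ≤ l

/-- The endomorphism `M^{⊗n}` of `(ℂ^l)^{⊗n}` induced by a matrix `M`, acting as `M`
on each tensor factor. -/
def tpow (n l : ℕ) (M : Matrix (Fin l) (Fin l) ℂ) :
    Module.End ℂ (⨂[ℂ] _ : Fin n, (Fin l → ℂ)) :=
  PiTensorProduct.map (fun _ : Fin n => Matrix.toLin' M)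

/-- The basic orthogonal invariant `v_τ = Σ_i e_{i(1)}⊗⋯⊗e_{i(2n)}`, summed over all
functions `i : {1,…,2n} → {1,…,l}` with `i∘τ = i`. -/
def vTau (n l : ℕ) (τ : Equiv.Perm (Fin (2 * n))) :
    ⨂[ℂ] _ : Fin (2 * n), (Fin l → ℂ) :=
  ∑ i ∈ Finset.univ.filter (fun i : Fin (2 * n) → Fin l => i ∘ τ = i),
    PiTensorProduct.tprod ℂ (fun j => Pi.single (i j) (1 : ℂ))

/-- The coordinates of `v_τ` in the standard basis of the tensor power, for an arbitrary
self-map `τ` of the index set. -/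
def matchingVec {N : ℕ} (l : ℕ) (τ : Fin N → Fin N) : (Fin N → Fin l) → ℂ :=
  fun i => if i ∘ τ = i then 1 else 0

/-- Fixed-point-free involutions. -/
def IsMatching {N : ℕ} (τ : Equiv.Perm (Fin N)) : Prop :=
  τ * τ = 1 ∧ ∀ x, τ x ≠ x

theorem IsMatching.apply_apply {N : ℕ} {τ : Equiv.Perm (Fin N)} (h : IsMatching τ) (x : Fin N) :
    τ (τ x) = x := by
  simpa using congrArg (fun σ : Equiv.Perm (Fin N) => σ x) h.1

/-! ### Linear independence -/

theorem lisLE.card_le {N l : ℕ} {τ : Equiv.Perm (Fin N)} (h : lisLE τ l) {s : Finset (Fin N)}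
    (hs : StrictMonoOn τ s) : s.card ≤ l :=
  h s.card (s.orderEmbOfFin rfl) (s.orderEmbOfFin rfl).strictMono fun _ _ hij =>
    hs (s.orderEmbOfFin_mem rfl _) (s.orderEmbOfFin_mem rfl _)
      ((s.orderEmbOfFin rfl).strictMono hij)

open Classical in
/-- The finite sets carrying increasing subsequences of `τ` strictly below the point
`(x, τ x)`. -/
def chainsBelow {N : ℕ} (τ : Equiv.Perm (Fin N)) (x : Fin N) : Finset (Finset (Fin N)) :=
  Finset.univ.filter fun s => StrictMonoOn τ s ∧ ∀ y ∈ s, y < x ∧ τ y < τ x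

theorem mem_chainsBelow {N : ℕ} {τ : Equiv.Perm (Fin N)} {x : Fin N} {s : Finset (Fin N)} :
    s ∈ chainsBelow τ x ↔ StrictMonoOn τ s ∧ ∀ y ∈ s, y < x ∧ τ y < τ x := by
  simp [chainsBelow]

/-- The length of the longest increasing subsequence of `τ` strictly below `(x, τ x)`. -/
def chainHeight {N : ℕ} (τ : Equiv.Perm (Fin N)) (x : Fin N) : ℕ :=
  (chainsBelow τ x).sup Finset.card

theorem exists_card_eq_chainHeight {N : ℕ} (τ : Equiv.Perm (Fin N)) (x : Fin N) :
    ∃ s ∈ chainsBelow τ x, s.card = chainHeight τ x := by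
  obtain ⟨s, hs, h⟩ := Finset.exists_mem_eq_sup (chainsBelow τ x)
    ⟨∅, mem_chainsBelow.2 (by simp [StrictMonoOn])⟩ Finset.card
  exact ⟨s, hs, h.symm⟩

theorem strictMonoOn_insert_of_mem_chainsBelow {N : ℕ} {τ : Equiv.Perm (Fin N)} {x : Fin N}
    {s : Finset (Fin N)} (hs : s ∈ chainsBelow τ x) :
    StrictMonoOn τ (insert x s : Finset (Fin N)) := by
  obtain ⟨h₁, h₂⟩ := mem_chainsBelow.1 hs
  intro a ha b hb hab
  simp only [Finset.coe_insert, Set.mem_insert_iff, Finset.mem_coe] at ha hb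
  rcases ha with rfl | ha <;> rcases hb with rfl | hb
  · exact absurd hab (lt_irrefl _)
  · exact absurd hab (h₂ b hb).1.asymm
  · exact (h₂ a ha).2
  · exact h₁ ha hb hab

theorem card_insert_of_mem_chainsBelow {N : ℕ} {τ : Equiv.Perm (Fin N)} {x : Fin N}
    {s : Finset (Fin N)} (hs : s ∈ chainsBelow τ x) : (insert x s).card = s.card + 1 :=
  Finset.card_insert_of_notMem fun hx => lt_irrefl _ ((mem_chainsBelow.1 hs).2 x hx).1

theorem chainHeight_lt {N l : ℕ} {τ : Equiv.Perm (Fin N)} (h : lisLE τ l) (x : Fin N) :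
    chainHeight τ x < l := by
  obtain ⟨s, hs, hc⟩ := exists_card_eq_chainHeight τ x
  have := h.card_le (strictMonoOn_insert_of_mem_chainsBelow hs)
  rw [card_insert_of_mem_chainsBelow hs] at this
  omega

theorem chainHeight_lt_chainHeight {N : ℕ} {τ : Equiv.Perm (Fin N)} {x y : Fin N}
    (hxy : x < y) (hτ : τ x < τ y) : chainHeight τ x < chainHeight τ y := by
  obtain ⟨s, hs, hc⟩ := exists_card_eq_chainHeight τ x
  have hmem : insert x s ∈ chainsBelow τ y := by
    refine mem_chainsBelow.2 ⟨strictMonoOn_insert_of_mem_chainsBelow hs, fun z hz => ?_⟩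
    rcases Finset.mem_insert.1 hz with rfl | hz
    · exact ⟨hxy, hτ⟩
    · have := (mem_chainsBelow.1 hs).2 z hz
      exact ⟨this.1.trans hxy, this.2.trans hτ⟩
  have := Finset.le_sup (f := Finset.card) hmem
  rw [card_insert_of_mem_chainsBelow hs, hc] at this
  exact this

theorem IsMatching.chainHeight_apply {N : ℕ} {τ : Equiv.Perm (Fin N)} (h : IsMatching τ)
    (x : Fin N) : chainHeight τ (τ x) = chainHeight τ x := by
  have key : ∀ y, chainHeight τ y ≤ chainHeight τ (τ y) := fun y => by
    obtain ⟨s, hs, hc⟩ := exists_card_eq_chainHeight τ y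
    obtain ⟨h₁, h₂⟩ := mem_chainsBelow.1 hs
    have hmem : s.map τ.toEmbedding ∈ chainsBelow τ (τ y) := by
      refine mem_chainsBelow.2 ⟨?_, ?_⟩
      · rintro _ ha _ hb hab
        simp only [Finset.coe_map, Set.mem_image, Finset.mem_coe] at ha hb
        obtain ⟨a, ha, rfl⟩ := ha
        obtain ⟨b, hb, rfl⟩ := hb
        simp only [Equiv.coe_toEmbedding, h.apply_apply] at hab ⊢
        exact (h₁.lt_iff_lt ha hb).1 hab
      · simp only [Finset.mem_map, Equiv.coe_toEmbedding, forall_exists_index, and_imp,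
          forall_apply_eq_imp_iff₂, h.apply_apply]
        exact fun a ha => (h₂ a ha).symm
    rw [← hc, ← Finset.card_map τ.toEmbedding]
    exact Finset.le_sup (f := Finset.card) hmem
  refine le_antisymm ?_ (key x)
  simpa only [h.apply_apply] using key (τ x)

/-- A matching without long increasing subsequences is decreasing on the classes of a suitable
colouring. -/
theorem IsMatching.exists_coloring {N l : ℕ} {τ : Equiv.Perm (Fin N)} (h : IsMatching τ)
    (hl : lisLE τ l) :
    ∃ i : Fin N → Fin l, i ∘ τ = i ∧ ∀ x y, x < y → i x = i y → τ y < τ x := by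
  refine ⟨fun x => ⟨chainHeight τ x, chainHeight_lt hl x⟩, ?_, fun x y hxy hi => ?_⟩
  · ext x
    exact h.chainHeight_apply x
  · by_contra hτ
    have hne : τ x ≠ τ y := fun e => hxy.ne (τ.injective e)
    have := chainHeight_lt_chainHeight hxy (lt_of_le_of_ne (not_lt.1 hτ) hne)
    exact this.ne (by simpa using hi)

/-- The first point at which two distinct maps on `Fin N` differ. -/
theorem exists_first_ne {N : ℕ} {α : Type*} {f g : Fin N → α} (h : f ≠ g) :
    ∃ x, (∀ y < x, f y = g y) ∧ f x ≠ g x := by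
  classical
  obtain ⟨x, hx⟩ := Function.ne_iff.1 h
  obtain ⟨m, hm, hmin⟩ := WellFounded.has_min (wellFounded_lt (α := Fin N))
    {x | f x ≠ g x} ⟨x, hx⟩
  exact ⟨m, fun y hy => by_contra fun hne => hmin y hne hy, hm⟩

/-- Among the matchings preserving the classes of a colouring, one that is decreasing on these
classes is lexicographically largest. -/
theorem IsMatching.toLex_le_of_decreasing {N : ℕ} {α : Type*} {σ τ : Equiv.Perm (Fin N)}
    (hτ : IsMatching τ) {i : Fin N → α} (hi : i ∘ τ = i)
    (hdec : ∀ x y, x < y → i x = i y → τ y < τ x) (hσ : i ∘ σ = i) :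
    toLex (σ : Fin N → Fin N) ≤ toLex (τ : Fin N → Fin N) := by
  by_cases hne : (σ : Fin N → Fin N) = τ
  · rw [hne]
  obtain ⟨x, hlt, hx⟩ := exists_first_ne hne
  refine le_of_lt ⟨x, hlt, ?_⟩
  change σ x < τ x
  by_contra hnot
  have hgt : τ x < σ x := lt_of_le_of_ne (not_lt.1 hnot) (Ne.symm hx)
  have hcol : i x = i (τ (σ x)) := by
    rw [show i (τ (σ x)) = i (σ x) from congrFun hi _, show i (σ x) = i x from congrFun hσ _]
  rcases lt_trichotomy x (τ (σ x)) with h | h | h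
  · have := hdec _ _ h hcol
    rw [hτ.apply_apply] at this
    exact this.asymm hgt
  · have := congrArg τ h
    rw [hτ.apply_apply] at this
    exact hx this.symm
  · have := hlt _ h
    rw [hτ.apply_apply] at this
    exact h.ne (σ.injective this)

theorem linearIndependent_matchingVec (N l : ℕ) :
    LinearIndependent ℂ
      (fun τ : {τ : Equiv.Perm (Fin N) // τ * τ = 1 ∧ (∀ x, τ x ≠ x) ∧ lisLE τ l} =>
        matchingVec l τ.1) := by
  classical
  rw [Fintype.linearIndependent_iff]
  intro g hg
  by_contra! hne
  obtain ⟨τ, hτ, hmin⟩ := Set.exists_min_image {τ | g τ ≠ 0}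
    (fun τ => toLex (τ.1 : Fin N → Fin N)) (Set.toFinite _) hne
  have hm : IsMatching τ.1 := ⟨τ.2.1, τ.2.2.1⟩
  obtain ⟨i, hi, hdec⟩ := hm.exists_coloring τ.2.2.2
  have h0 := congrFun hg i
  rw [Finset.sum_apply, Finset.sum_eq_single τ] at h0
  · exact hτ (by simpa [matchingVec, hi] using h0)
  · intro σ _ hστ
    by_cases hσ : i ∘ σ.1 = i
    · by_cases hgσ : g σ = 0
      · simp [hgσ]
      · refine absurd ?_ hστ
        have := le_antisymm (hm.toLex_le_of_decreasing hi hdec hσ) (hmin σ hgσ)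
        exact Subtype.ext (DFunLike.coe_injective (toLex.injective this))
    · simp [matchingVec, hσ]
  · simp

/-! ### Straightening -/

/-- The matching obtained from `τ` by permuting the partners of the points `f j` by `σ`. -/
def repartner {N k : ℕ} (τ : Equiv.Perm (Fin N)) (f : Fin k ↪ Fin N)
    (σ : Equiv.Perm (Fin k)) : Equiv.Perm (Fin N) :=
  σ.viaFintypeEmbedding (f.trans τ.toEmbedding) * τ *
    (σ.viaFintypeEmbedding (f.trans τ.toEmbedding))⁻¹

section Repartner

variable {N k : ℕ} {τ : Equiv.Perm (Fin N)} {f : Fin k ↪ Fin N}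

theorem IsMatching.repartner (h : IsMatching τ) (f : Fin k ↪ Fin N) (σ : Equiv.Perm (Fin k)) :
    IsMatching (repartner τ f σ) := by
  have hinv : ∀ g : Equiv.Perm (Fin N), g * τ * g⁻¹ * (g * τ * g⁻¹) = g * (τ * τ) * g⁻¹ :=
    fun g => by group
  refine ⟨by rw [_root_.repartner, hinv, h.1]; group, fun x hx => ?_⟩
  simp only [_root_.repartner, Equiv.Perm.mul_apply] at hx
  rw [← Equiv.Perm.eq_inv_iff_eq] at hx
  exact h.2 _ hx

theorem repartner_one (τ : Equiv.Perm (Fin N)) (f : Fin k ↪ Fin N) : repartner τ f 1 = τ := by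
  have : Equiv.Perm.viaFintypeEmbedding 1 (f.trans τ.toEmbedding) = 1 :=
    Equiv.Perm.extendDomain_one _
  simp [repartner, this]

theorem IsMatching.apply_ne_of_strictMono (h : IsMatching τ) (hf : StrictMono f)
    (hτf : StrictMono fun i => τ (f i)) (i j : Fin k) : τ (f i) ≠ f j := by
  intro e
  have e' : τ (f j) = f i := by rw [← e, h.apply_apply]
  rcases lt_trichotomy i j with hij | rfl | hij
  · have h₁ := hf hij
    have h₂ := hτf hij
    simp only [e, e'] at h₂
    exact h₁.asymm h₂
  · exact h.2 _ e
  · have h₁ := hf hij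
    have h₂ := hτf hij
    simp only [e, e'] at h₂
    exact h₁.asymm h₂

variable (σ : Equiv.Perm (Fin k))

theorem repartner_apply_left (hdisj : ∀ i j, τ (f i) ≠ f j) (j : Fin k) :
    repartner τ f σ (f j) = τ (f (σ j)) := by
  have h₁ : (σ.viaFintypeEmbedding (f.trans τ.toEmbedding))⁻¹ (f j) = f j := by
    rw [Equiv.Perm.inv_eq_iff_eq, Equiv.Perm.viaFintypeEmbedding_apply_notMem_range]
    rintro ⟨i, hi⟩
    exact hdisj i j hi
  rw [repartner, Equiv.Perm.mul_apply, Equiv.Perm.mul_apply, h₁]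
  exact Equiv.Perm.viaFintypeEmbedding_apply_image σ (f.trans τ.toEmbedding) j

theorem repartner_apply_right (h : IsMatching τ) (hdisj : ∀ i j, τ (f i) ≠ f j) (j : Fin k) :
    repartner τ f σ (τ (f (σ j))) = f j := by
  rw [← repartner_apply_left σ hdisj, (h.repartner f σ).apply_apply]

theorem repartner_apply_of_notMem {x : Fin N} (h₁ : ∀ j, x ≠ f j)
    (h₂ : ∀ j, x ≠ τ (f j)) : repartner τ f σ x = τ x := by
  have h₁ : (σ.viaFintypeEmbedding (f.trans τ.toEmbedding))⁻¹ x = x := by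
    rw [Equiv.Perm.inv_eq_iff_eq, Equiv.Perm.viaFintypeEmbedding_apply_notMem_range]
    rintro ⟨i, hi⟩
    exact h₂ i hi.symm
  rw [repartner, Equiv.Perm.mul_apply, Equiv.Perm.mul_apply, h₁,
    Equiv.Perm.viaFintypeEmbedding_apply_notMem_range]
  rintro ⟨i, hi⟩
  exact ‹∀ j, x ≠ f j› i (τ.injective hi.symm)

theorem comp_repartner_eq_iff {α : Type*} (h : IsMatching τ) (hdisj : ∀ i j, τ (f i) ≠ f j)
    (i : Fin N → α) :
    i ∘ repartner τ f σ = i ↔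
      (∀ x, (∀ j, x ≠ f j) → (∀ j, x ≠ τ (f j)) → i (τ x) = i x) ∧
        ∀ j, i (τ (f (σ j))) = i (f j) := by
  constructor
  · intro hi
    refine ⟨fun x h₁ h₂ => ?_, fun j => ?_⟩
    · rw [← repartner_apply_of_notMem σ h₁ h₂]
      exact congrFun hi x
    · rw [← repartner_apply_left σ hdisj]
      exact congrFun hi _
  · rintro ⟨h₁, h₂⟩
    ext x
    rw [Function.comp_apply]
    by_cases hx : ∃ j, x = f j
    · obtain ⟨j, rfl⟩ := hx
      rw [repartner_apply_left σ hdisj, h₂]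
    by_cases hx' : ∃ j, x = τ (f j)
    · obtain ⟨j, rfl⟩ := hx'
      obtain ⟨j, rfl⟩ := σ.surjective j
      rw [repartner_apply_right σ h hdisj, h₂]
    push Not at hx hx'
    rw [repartner_apply_of_notMem σ hx hx', h₁ x hx hx']

theorem toLex_lt_repartner (h : IsMatching τ) (hf : StrictMono f)
    (hτf : StrictMono fun i => τ (f i)) (hσ : σ ≠ 1) :
    toLex (τ : Fin N → Fin N) < toLex (repartner τ f σ : Fin N → Fin N) := by
  have hdisj := h.apply_ne_of_strictMono hf hτf
  have aux : ∀ (ρ : Equiv.Perm (Fin k)) (j : Fin k), ρ j ≠ j → (∀ i < j, ρ i = i) → j < ρ j := by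
    intro ρ j hj hi
    by_contra hlt
    have := hi (ρ j) (lt_of_le_of_ne (not_lt.1 hlt) hj)
    exact hj (ρ.injective this)
  have hright : ∀ j, repartner τ f σ (τ (f j)) = f (σ⁻¹ j) := fun j => by
    simpa using repartner_apply_right σ h hdisj (σ⁻¹ j)
  have hne : (τ : Fin N → Fin N) ≠ repartner τ f σ := by
    intro e
    refine hσ (Equiv.ext fun j => ?_)
    have := congrFun e (f j)
    rw [repartner_apply_left σ hdisj] at this
    exact (f.injective (τ.injective this)).symm
  obtain ⟨x, hlt, hx⟩ := exists_first_ne hne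
  refine ⟨x, hlt, ?_⟩
  change τ x < repartner τ f σ x
  by_cases hxf : ∃ j, x = f j
  · obtain ⟨j, rfl⟩ := hxf
    rw [repartner_apply_left σ hdisj] at hx ⊢
    refine hτf (aux σ j (fun e => hx (by rw [e])) fun i hi => ?_)
    have := hlt _ (hf hi)
    rw [repartner_apply_left σ hdisj] at this
    exact (f.injective (τ.injective this)).symm
  by_cases hxf' : ∃ j, x = τ (f j)
  · obtain ⟨j, rfl⟩ := hxf'
    rw [hright, h.apply_apply] at hx ⊢
    refine hf (aux σ⁻¹ j (fun e => hx (by rw [e])) fun i hi => ?_)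
    have := hlt _ (hτf hi)
    rw [hright, h.apply_apply] at this
    exact (f.injective this).symm
  · push Not at hxf hxf'
    exact absurd (repartner_apply_of_notMem σ hxf hxf').symm hx

end Repartner

/-- The determinantal relation between the vectors of matchings, coming from the vanishing of
Gram determinants of size larger than `l`. -/
theorem sum_sign_smul_matchingVec_repartner {N k l : ℕ} (hkl : l < k) {τ : Equiv.Perm (Fin N)}
    {f : Fin k ↪ Fin N} (h : IsMatching τ) (hdisj : ∀ i j, τ (f i) ≠ f j) :
    ∑ σ : Equiv.Perm (Fin k),
      ((Equiv.Perm.sign σ : ℤ) : ℂ) • matchingVec l (repartner τ f σ) = 0 := by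
  classical
  ext i
  let M : Matrix (Fin k) (Fin k) ℂ :=
    Matrix.of fun a b => if i (τ (f a)) = i (f b) then 1 else 0
  obtain ⟨a, b, hab, e⟩ := Fintype.exists_ne_map_eq_of_card_lt (fun j => i (f j)) (by simpa)
  have hM : M.det = 0 := Matrix.det_zero_of_column_eq hab fun c => by
    have e' : i (f a) = i (f b) := e
    simp only [M, Matrix.of_apply, e']
  have hterm : ∀ σ : Equiv.Perm (Fin k), matchingVec l (repartner τ f σ) i =
      (if ∀ x, (∀ j, x ≠ f j) → (∀ j, x ≠ τ (f j)) → i (τ x) = i x then 1 else 0) *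
        ∏ j, M (σ j) j := by
    intro σ
    simp only [matchingVec, comp_repartner_eq_iff σ h hdisj, M, Matrix.of_apply,
      Fintype.prod_ite_zero, Finset.prod_const_one]
    split_ifs <;> simp_all
  simp only [Finset.sum_apply, Pi.smul_apply, hterm, smul_eq_mul, Pi.zero_apply]
  rw [Matrix.det_apply'] at hM
  simp only [mul_left_comm (Int.cast _ : ℂ), ← Finset.mul_sum, hM, mul_zero]

theorem matchingVec_mem_span {N l : ℕ} {τ : Equiv.Perm (Fin N)} (h : IsMatching τ) :
    matchingVec l τ ∈ Submodule.span ℂ (Set.range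
      (fun τ : {τ : Equiv.Perm (Fin N) // τ * τ = 1 ∧ (∀ x, τ x ≠ x) ∧ lisLE τ l} =>
        matchingVec l τ.1)) := by
  classical
  have hwf : WellFounded fun σ τ : Equiv.Perm (Fin N) =>
      toLex (τ : Fin N → Fin N) < toLex (σ : Fin N → Fin N) :=
    InvImage.wf (fun τ : Equiv.Perm (Fin N) => toLex (τ : Fin N → Fin N)) wellFounded_gt
  induction τ using hwf.induction with
  | _ τ ih =>
  by_cases hl : lisLE τ l
  · exact Submodule.subset_span ⟨⟨τ, h.1, h.2, hl⟩, rfl⟩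
  rw [lisLE] at hl
  push Not at hl
  obtain ⟨k, f, hf, hτf, hkl⟩ := hl
  let f' : Fin k ↪ Fin N := ⟨f, hf.injective⟩
  have hrel := sum_sign_smul_matchingVec_repartner (f := f') hkl h
    (h.apply_ne_of_strictMono hf hτf)
  rw [← Finset.add_sum_erase _ _ (Finset.mem_univ 1), repartner_one] at hrel
  simp only [Equiv.Perm.sign_one, Units.val_one, Int.cast_one, one_smul] at hrel
  rw [eq_neg_of_add_eq_zero_left hrel]
  refine Submodule.neg_mem _ (Submodule.sum_mem _ fun σ hσ => Submodule.smul_mem _ _ ?_)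
  exact ih _ (toLex_lt_repartner σ h hf hτf (Finset.ne_of_mem_erase hσ)) (h.repartner f' σ)

/-! ### Tensors orthogonal to all matchings -/

/-- Orthogonality of a real matrix given by its entries. -/
def IsOrthogonalArray {l : ℕ} (U : Fin l → Fin l → ℝ) : Prop :=
  Matrix.of U ∈ Matrix.orthogonalGroup (Fin l) ℝ

/-- The coordinate version of the space of orthogonal invariants. -/
def orthogonalInvariants (N l : ℕ) : Submodule ℂ ((Fin N → Fin l) → ℂ) where
  carrier := {v | ∀ U, IsOrthogonalArray U → ∀ i : Fin N → Fin l,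
    ∑ j, (∏ p, (U (i p) (j p) : ℂ)) * v j = v i}
  zero_mem' := by simp
  add_mem' := fun {v w} hv hw U hU i => by
    simp only [Pi.add_apply, mul_add, Finset.sum_add_distrib, hv U hU i, hw U hU i]
  smul_mem' := fun c v hv U hU i => by
    simp only [Pi.smul_apply, smul_eq_mul, mul_left_comm _ c, ← Finset.mul_sum, hv U hU i]

theorem IsOrthogonalArray.sum_row {l : ℕ} {U : Fin l → Fin l → ℝ}
    (hU : IsOrthogonalArray U) (a b : Fin l) :
    ∑ c, (U a c : ℂ) * (U b c : ℂ) = if a = b then 1 else 0 := by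
  have h := congrFun (congrFun ((Matrix.mem_orthogonalGroup_iff (Fin l) ℝ).1 hU) a) b
  rw [Matrix.mul_apply, Matrix.one_apply] at h
  simp only [Matrix.transpose_apply, Matrix.of_apply] at h
  simpa [apply_ite Complex.ofReal] using congrArg Complex.ofReal h

theorem IsOrthogonalArray.sum_col {l : ℕ} {U : Fin l → Fin l → ℝ}
    (hU : IsOrthogonalArray U) (a b : Fin l) :
    ∑ c, (U c a : ℂ) * (U c b : ℂ) = if a = b then 1 else 0 := by
  have h := congrFun (congrFun ((Matrix.mem_orthogonalGroup_iff' (Fin l) ℝ).1 hU) a) b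
  rw [Matrix.mul_apply, Matrix.one_apply] at h
  simp only [Matrix.transpose_apply, Matrix.of_apply] at h
  simpa [apply_ite Complex.ofReal] using congrArg Complex.ofReal h

/-- Splitting a product over a matched index set into a product over the pairs. -/
theorem IsMatching.prod_eq {N : ℕ} {τ : Equiv.Perm (Fin N)} (h : IsMatching τ)
    (g : Fin N → ℂ) : ∏ p, g p = ∏ p : {p // p < τ p}, g p * g (τ p) := by
  classical
  rw [Finset.prod_mul_distrib, ← Fintype.prod_subtype_mul_prod_subtype (fun p => p < τ p) g]
  congr 1
  symm
  refine Fintype.prod_equiv (τ.subtypeEquiv fun p => ?_) _ _ fun p => rfl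
  rw [h.apply_apply, not_lt]
  exact ⟨le_of_lt, fun hp => lt_of_le_of_ne hp (h.2 p).symm⟩

/-- Functions constant on the pairs of a matching are functions on the set of pairs. -/
def IsMatching.constOnPairsEquiv {N : ℕ} {α : Type*} {τ : Equiv.Perm (Fin N)}
    (h : IsMatching τ) : {j : Fin N → α // j ∘ τ = j} ≃ ({p // p < τ p} → α) where
  toFun j p := j.1 p
  invFun g := ⟨fun p => if hp : p < τ p then g ⟨p, hp⟩ else
      g ⟨τ p, by rw [h.apply_apply]; exact lt_of_le_of_ne (not_lt.1 hp) (h.2 p)⟩, by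
    funext p
    have hτ := h.apply_apply p
    have hne := h.2 p
    by_cases hp : p < τ p
    · have : ¬ τ p < p := hp.asymm
      simp [hτ, hp, this]
    · have : τ p < p := lt_of_le_of_ne (not_lt.1 hp) hne
      simp [hτ, hp, this]⟩
  left_inv j := by
    refine Subtype.ext (funext fun p => ?_)
    by_cases hp : p < τ p
    · simp [hp]
    · simpa [hp] using congrFun j.2 p
  right_inv g := by
    funext p
    simp [p.2]

theorem matchingVec_mem_orthogonalInvariants {N : ℕ} (l : ℕ) {τ : Equiv.Perm (Fin N)}
    (h : IsMatching τ) : matchingVec l τ ∈ orthogonalInvariants N l := by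
  classical
  intro U hU i
  simp only [matchingVec, mul_ite, mul_one, mul_zero]
  rw [← Finset.sum_filter, Finset.sum_subtype (p := fun j => j ∘ τ = j) _ (by simp),
    ← h.constOnPairsEquiv.symm.sum_comp]
  have hterm : ∀ g : {p // p < τ p} → Fin l,
      (∏ p, (U (i p) ((h.constOnPairsEquiv.symm g).1 p) : ℂ)) =
        ∏ p : {p // p < τ p}, (U (i p) (g p) : ℂ) * (U (i (τ p)) (g p) : ℂ) := by
    intro g
    rw [h.prod_eq]
    refine Finset.prod_congr rfl fun p _ => ?_
    have h₁ : (h.constOnPairsEquiv.symm g).1 p = g p :=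
      congrFun (h.constOnPairsEquiv.apply_symm_apply g) p
    have h₂ : (h.constOnPairsEquiv.symm g).1 (τ p) = (h.constOnPairsEquiv.symm g).1 p :=
      congrFun (h.constOnPairsEquiv.symm g).2 p
    rw [h₂, h₁]
  simp only [hterm]
  rw [← Fintype.piFinset_univ, ← Finset.prod_univ_sum (fun _ => Finset.univ)
    fun (p : {p // p < τ p}) c => (U (i p) c : ℂ) * (U (i (τ p)) c : ℂ)]
  simp only [hU.sum_row]
  rw [Fintype.prod_ite_zero, Finset.prod_const_one]
  refine if_congr ⟨fun hi => ?_, fun hi p => (congrFun hi p).symm⟩ rfl rfl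
  ext p
  rw [Function.comp_apply]
  by_cases hp : p < τ p
  · rw [hi ⟨p, hp⟩]
  · have : i (τ p) = i (τ (τ p)) :=
      hi ⟨τ p, by rw [h.apply_apply]; exact lt_of_le_of_ne (not_lt.1 hp) (h.2 p)⟩
    rw [this, h.apply_apply]

theorem comp_perm_mem_orthogonalInvariants {N l : ℕ} {v : (Fin N → Fin l) → ℂ}
    (hv : v ∈ orthogonalInvariants N l) (e : Equiv.Perm (Fin N)) :
    (fun i => v (i ∘ e)) ∈ orthogonalInvariants N l := by
  intro U hU i
  change _ = v (i ∘ e)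
  rw [← hv U hU (i ∘ e)]
  refine Fintype.sum_equiv (Equiv.arrowCongr e.symm (Equiv.refl _)) _ _ fun j => ?_
  rw [← Equiv.prod_comp e]
  rfl

/-- Orthogonality to all matchings. -/
def OrthogonalToMatchings {N l : ℕ} (v : (Fin N → Fin l) → ℂ) : Prop :=
  ∀ τ : Equiv.Perm (Fin N), IsMatching τ → ∑ i, matchingVec l τ i * v i = 0

theorem OrthogonalToMatchings.comp_perm {N l : ℕ} {v : (Fin N → Fin l) → ℂ}
    (hv : OrthogonalToMatchings v) (e : Equiv.Perm (Fin N)) :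
    OrthogonalToMatchings fun i => v (i ∘ e) := by
  intro τ hτ
  have hm : IsMatching (e⁻¹ * τ * e) := by
    refine ⟨?_, fun x hx => ?_⟩
    · have : e⁻¹ * τ * e * (e⁻¹ * τ * e) = e⁻¹ * (τ * τ) * e := by group
      rw [this, hτ.1]
      group
    · simp only [Equiv.Perm.mul_apply, Equiv.Perm.inv_eq_iff_eq] at hx
      exact hτ.2 _ hx
  rw [← hv _ hm]
  refine Fintype.sum_equiv (Equiv.arrowCongr e.symm (Equiv.refl _)) _ _ fun i => ?_
  have hiff : (i ∘ e) ∘ (e⁻¹ * τ * e) = i ∘ e ↔ i ∘ τ = i := by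
    constructor
    · intro h
      funext x
      simpa [Equiv.Perm.mul_apply] using congrFun h (e⁻¹ x)
    · intro h
      funext x
      simpa [Equiv.Perm.mul_apply] using congrFun h (e x)
  change (if i ∘ τ = i then (1 : ℂ) else 0) * v (i ∘ e) =
    (if (i ∘ e) ∘ (e⁻¹ * τ * e) = i ∘ e then 1 else 0) * v (i ∘ e)
  rw [if_congr hiff rfl rfl]

/-- Contraction of the first two tensor factors. -/
def contract {N l : ℕ} (v : (Fin (N + 2) → Fin l) → ℂ) : (Fin N → Fin l) → ℂ :=
  fun i => ∑ c, v (Fin.cons c (Fin.cons c i : Fin (N + 1) → Fin l))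

theorem sum_fin_add_two {N l : ℕ} (F : (Fin (N + 2) → Fin l) → ℂ) :
    ∑ j, F j = ∑ j : Fin N → Fin l, ∑ a, ∑ b,
      F (Fin.cons a (Fin.cons b j : Fin (N + 1) → Fin l)) := by
  have h : ∀ (M : ℕ) (G : (Fin (M + 1) → Fin l) → ℂ),
      ∑ j, G j = ∑ a, ∑ j : Fin M → Fin l, G (Fin.cons a j) := fun M G => by
    rw [← (Fin.consEquiv fun _ => Fin l).sum_comp, Fintype.sum_prod_type]
    rfl
  simp only [h]
  rw [Finset.sum_comm' (t' := Finset.univ) (s' := fun _ => Finset.univ) (by simp)]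
  rw [Finset.sum_comm]
  simp only [Finset.sum_comm (s := (Finset.univ : Finset (Fin N → Fin l)))]

theorem contract_mem_orthogonalInvariants {N l : ℕ} {v : (Fin (N + 2) → Fin l) → ℂ}
    (hv : v ∈ orthogonalInvariants (N + 2) l) : contract v ∈ orthogonalInvariants N l := by
  intro U hU i
  simp only [contract]
  have h : ∀ c, v (Fin.cons c (Fin.cons c i : Fin (N + 1) → Fin l)) =
      ∑ j : Fin N → Fin l, ∑ a, ∑ b, (∏ p, (U (i p) (j p) : ℂ)) *
        (v (Fin.cons a (Fin.cons b j : Fin (N + 1) → Fin l)) * ((U c a : ℂ) * (U c b : ℂ))) := by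
    intro c
    rw [← hv U hU, sum_fin_add_two]
    refine Finset.sum_congr rfl fun j _ => Finset.sum_congr rfl fun a _ =>
      Finset.sum_congr rfl fun b _ => ?_
    simp only [Fin.prod_univ_succ, Fin.cons_zero, Fin.cons_succ]
    ring
  simp only [h]
  rw [Finset.sum_comm]
  refine Finset.sum_congr rfl fun j _ => ?_
  rw [Finset.sum_comm, Finset.mul_sum]
  refine Finset.sum_congr rfl fun a _ => ?_
  rw [Finset.sum_comm]
  simp only [← Finset.mul_sum, hU.sum_col]
  simp

/-- Adding a first pair to a matching. -/
def consPair {N : ℕ} (τ : Fin N → Fin N) : Fin (N + 2) → Fin (N + 2) :=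
  Fin.cons 1 (Fin.cons 0 fun x => (τ x).succ.succ : Fin (N + 1) → Fin (N + 2))

theorem consPair_zero {N : ℕ} (τ : Fin N → Fin N) : consPair τ 0 = 1 := rfl

theorem consPair_one {N : ℕ} (τ : Fin N → Fin N) : consPair τ 1 = 0 := rfl

theorem consPair_succ_succ {N : ℕ} (τ : Fin N → Fin N) (x : Fin N) :
    consPair τ x.succ.succ = (τ x).succ.succ := rfl

theorem forall_fin_add_two {N : ℕ} {P : Fin (N + 2) → Prop} :
    (∀ x, P x) ↔ P 0 ∧ P 1 ∧ ∀ x : Fin N, P x.succ.succ := by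
  rw [Fin.forall_fin_succ, Fin.forall_fin_succ]
  rfl

theorem OrthogonalToMatchings.contract {N l : ℕ} {v : (Fin (N + 2) → Fin l) → ℂ}
    (hv : OrthogonalToMatchings v) : OrthogonalToMatchings (contract v) := by
  intro τ hτ
  have hinv : Function.Involutive (consPair τ) := by
    refine forall_fin_add_two.2 ⟨rfl, rfl, fun x => ?_⟩
    rw [consPair_succ_succ, consPair_succ_succ, hτ.apply_apply]
  have hm : IsMatching hinv.toPerm := by
    refine ⟨Equiv.ext hinv, forall_fin_add_two.2 ⟨?_, ?_, fun x => ?_⟩⟩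
    · exact Fin.zero_ne_one.symm
    · exact Fin.zero_ne_one
    · change consPair τ x.succ.succ ≠ _
      rw [consPair_succ_succ]
      exact fun e => hτ.2 x (Fin.succ_injective _ (Fin.succ_injective _ e))
  have hiff : ∀ (i : Fin N → Fin l) (a b : Fin l),
      (Fin.cons a (Fin.cons b i : Fin (N + 1) → Fin l) : Fin (N + 2) → Fin l) ∘ hinv.toPerm =
        Fin.cons a (Fin.cons b i : Fin (N + 1) → Fin l) ↔ a = b ∧ i ∘ τ = i := by
    intro i a b
    rw [funext_iff, forall_fin_add_two, funext_iff]
    simp only [Function.comp_apply, Function.Involutive.coe_toPerm, consPair_zero, consPair_one,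
      consPair_succ_succ, Fin.cons_zero, Fin.cons_succ]
    change b = a ∧ a = b ∧ _ ↔ _
    tauto
  rw [← hv _ hm, sum_fin_add_two]
  refine Finset.sum_congr rfl fun i _ => ?_
  simp only [matchingVec, hiff, _root_.contract]
  by_cases hi : i ∘ τ = i <;> simp [hi]

/-- Vanishing of all contractions. -/
def IsTraceless {N l : ℕ} (v : (Fin N → Fin l) → ℂ) : Prop :=
  ∀ p q, p ≠ q → ∀ i, ∑ c, v (Function.update (Function.update i p c) q c) = 0

theorem isTraceless_of_contract_eq_zero {N l : ℕ} {v : (Fin (N + 2) → Fin l) → ℂ}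
    (hv : ∀ e : Equiv.Perm (Fin (N + 2)), contract (fun i => v (i ∘ e)) = 0) :
    IsTraceless v := by
  intro p q hpq i
  obtain ⟨e, he₀, he₁⟩ : ∃ e : Equiv.Perm (Fin (N + 2)), e 0 = p ∧ e 1 = q := by
    refine ⟨Equiv.swap (Equiv.swap 0 p 1) q * Equiv.swap 0 p, ?_, by simp⟩
    rw [Equiv.Perm.mul_apply, Equiv.swap_apply_left]
    refine Equiv.swap_apply_of_ne_of_ne (fun e => ?_) hpq
    rw [eq_comm, Equiv.swap_apply_eq_iff, Equiv.swap_apply_right] at e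
    exact Fin.zero_ne_one e.symm
  have h := congrFun (hv e⁻¹) fun x => i (e x.succ.succ)
  simp only [contract, Pi.zero_apply] at h
  rw [← h]
  refine Finset.sum_congr rfl fun c _ => congrArg v ?_
  funext y
  obtain ⟨x, rfl⟩ := e.surjective y
  rw [Function.comp_apply, Equiv.Perm.coe_inv, Equiv.symm_apply_apply]
  revert x
  subst he₀ he₁
  refine forall_fin_add_two.2 ⟨?_, ?_, fun x => ?_⟩
  · rw [Function.update_of_ne hpq, Function.update_self, Fin.cons_zero]
  · rw [Function.update_self]
    rfl
  · rw [Function.update_of_ne, Function.update_of_ne, Fin.cons_succ, Fin.cons_succ]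
    · exact fun e' => Fin.succ_ne_zero _ (e.injective e')
    · exact fun e' => Fin.succ_ne_zero _ (Fin.succ_injective _ (e.injective e'))

/-- The derivation action of a matrix unit: each tensor factor `e_b` is in turn replaced
by `e_a`. -/
def unitAction {N l : ℕ} (a b : Fin l) (v : (Fin N → Fin l) → ℂ) : (Fin N → Fin l) → ℂ :=
  fun i => ∑ p, if i p = a then v (Function.update i p b) else 0

theorem sum_prod_erase_mul {N l : ℕ} (i : Fin N → Fin l) (p : Fin N)
    (g : (Fin N → Fin l) → ℂ) :
    ∑ j : Fin N → Fin l, (∏ q ∈ Finset.univ.erase p, if i q = j q then (1 : ℂ) else 0) * g j =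
      ∑ c, g (Function.update i p c) := by
  symm
  refine Fintype.sum_of_injective (fun c => Function.update i p c)
    (Function.update_injective i p) _ _ (fun j hj => ?_) fun c => ?_
  · obtain ⟨q, hq, hne⟩ : ∃ q, q ≠ p ∧ i q ≠ j q := by
      by_contra! hall
      refine hj ⟨j p, funext fun q => ?_⟩
      by_cases hq : q = p
      · subst hq
        simp
      · simp [hq, hall q hq]
    rw [Finset.prod_eq_zero (Finset.mem_erase.2 ⟨hq, Finset.mem_univ q⟩) (if_neg hne), zero_mul]
  · rw [Finset.prod_eq_one fun q hq => ?_, one_mul]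
    rw [Function.update_of_ne (Finset.ne_of_mem_erase hq), if_pos rfl]

/-- The entries of the rotation by the angle `t` in the plane of two coordinates. -/
def rotationArray {l : ℕ} (a b : Fin l) (t : ℝ) (x y : Fin l) : ℝ :=
  (if x = y then 1 else 0) +
    (Real.cos t - 1) * (if x = y ∧ (x = a ∨ x = b) then 1 else 0) +
    Real.sin t * ((if x = a ∧ y = b then 1 else 0) - if x = b ∧ y = a then 1 else 0)

theorem isOrthogonalArray_rotationArray {l : ℕ} {a b : Fin l} (hab : a ≠ b) (t : ℝ) :
    IsOrthogonalArray (rotationArray a b t) := by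
  rw [IsOrthogonalArray, Matrix.mem_orthogonalGroup_iff]
  let P : Matrix (Fin l) (Fin l) ℝ := Matrix.single a a 1 + Matrix.single b b 1
  let X : Matrix (Fin l) (Fin l) ℝ := Matrix.single a b 1 - Matrix.single b a 1
  have hR : Matrix.of (rotationArray a b t) = 1 + (Real.cos t - 1) • P + Real.sin t • X := by
    ext x y
    simp only [rotationArray, Matrix.of_apply, P, X, Matrix.add_apply, Matrix.smul_apply,
      Matrix.sub_apply, Matrix.single_apply, Matrix.one_apply, smul_eq_mul]
    congr 3
    · by_cases hxa : x = a <;> by_cases hxb : x = b <;> grind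
    · grind
    · grind
  have hPP : P * P = P := by simp [P, mul_add, add_mul, hab, hab.symm]
  have hPX : P * X = X := by simp [P, X, mul_sub, add_mul, hab, hab.symm]
  have hXP : X * P = X := by simp [P, X, mul_add, sub_mul, hab, hab.symm]; abel
  have hXX : X * X = -P := by simp [P, X, mul_sub, sub_mul, hab, hab.symm]; abel
  have hP : P.transpose = P := by simp [P]
  have hX : X.transpose = -X := by simp [X]
  have hcs : (Real.cos t - 1) + (Real.cos t - 1) + (Real.cos t - 1) * (Real.cos t - 1) +
      Real.sin t * Real.sin t = 0 := by
    nlinarith [Real.sin_sq_add_cos_sq t]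
  rw [hR]
  simp only [Matrix.transpose_add, Matrix.transpose_smul, Matrix.transpose_one, hP, hX, mul_add,
    add_mul, mul_one, one_mul, Algebra.smul_mul_assoc, Algebra.mul_smul_comm, mul_neg, hPP, hPX, hXP, hXX]
  calc _ = 1 + ((Real.cos t - 1) + (Real.cos t - 1) + (Real.cos t - 1) * (Real.cos t - 1) +
        Real.sin t * Real.sin t) • P := by module
    _ = 1 := by rw [hcs, zero_smul, add_zero]

/-- Orthogonal invariants are annihilated by the skew-symmetric matrices. -/
theorem unitAction_comm {N l : ℕ} {v : (Fin N → Fin l) → ℂ} (hv : v ∈ orthogonalInvariants N l)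
    (a b : Fin l) : unitAction a b v = unitAction b a v := by
  rcases eq_or_ne a b with rfl | hab
  · rfl
  funext i
  let X : Fin l → Fin l → ℝ := fun x y =>
    (if x = a ∧ y = b then 1 else 0) - if x = b ∧ y = a then 1 else 0
  have hentry : ∀ x y, HasDerivAt (fun t : ℝ => (rotationArray a b t x y : ℂ)) (X x y) 0 := by
    intro x y
    refine HasDerivAt.ofReal_comp ?_
    have h := (((Real.hasDerivAt_cos 0).sub_const 1).mul_const
      (if x = y ∧ (x = a ∨ x = b) then (1 : ℝ) else 0)).const_add (if x = y then (1 : ℝ) else 0)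
    have h' : HasDerivAt (fun t => rotationArray a b t x y) _ 0 :=
      h.add ((Real.hasDerivAt_sin 0).mul_const (X x y))
    simpa only [Real.sin_zero, neg_zero, zero_mul, zero_add, Real.cos_zero, one_mul] using h'
  have hzero : ∀ x y, (rotationArray a b 0 x y : ℂ) = if x = y then 1 else 0 := by
    intro x y
    simp [rotationArray, apply_ite Complex.ofReal]
  have hder := HasDerivAt.fun_sum (u := Finset.univ) fun (j : Fin N → Fin l) _ =>
    (HasDerivAt.fun_finsetProd (u := Finset.univ) fun p _ => hentry (i p) (j p)).mul_const (v j)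
  have hconst : (fun t : ℝ => ∑ j : Fin N → Fin l,
      (∏ p, (rotationArray a b t (i p) (j p) : ℂ)) * v j) = fun _ => v i :=
    funext fun t => hv _ (isOrthogonalArray_rotationArray hab t) i
  rw [hconst] at hder
  have h := hder.unique (hasDerivAt_const _ _)
  simp only [hzero, smul_eq_mul, Finset.sum_mul, mul_assoc] at h
  rw [Finset.sum_comm] at h
  simp only [sum_prod_erase_mul i _ fun j => _ * v j] at h
  rw [← sub_eq_zero, ← h, unitAction, unitAction, ← Finset.sum_sub_distrib]
  refine Finset.sum_congr rfl fun p _ => ?_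
  have hX : ∀ x y, ((X x y : ℝ) : ℂ) =
      (if x = a ∧ y = b then 1 else 0) - if x = b ∧ y = a then 1 else 0 := by
    intro x y
    simp [X, apply_ite Complex.ofReal]
  simp only [Function.update_self, hX, sub_mul, ite_mul, one_mul, zero_mul, Finset.sum_sub_distrib, ite_and]
  by_cases h₁ : i p = a <;> by_cases h₂ : i p = b <;> simp [h₁, h₂]

theorem even_card_of_mem_orthogonalInvariants {N l : ℕ} {v : (Fin N → Fin l) → ℂ}
    (hv : v ∈ orthogonalInvariants N l) {i : Fin N → Fin l} (hi : v i ≠ 0) (a : Fin l) :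
    Even (Finset.univ.filter fun p => i p = a).card := by
  let U : Fin l → Fin l → ℝ := fun x y => if x = y then (if x = a then -1 else 1) else 0
  have hU : IsOrthogonalArray U := by
    have : Matrix.of U = Matrix.diagonal fun x => if x = a then (-1 : ℝ) else 1 := by
      ext x y
      simp [U, Matrix.diagonal_apply]
    rw [IsOrthogonalArray, Matrix.mem_orthogonalGroup_iff, this,
      Matrix.diagonal_transpose, Matrix.diagonal_mul_diagonal, ← Matrix.diagonal_one]
    congr 1
    funext x
    by_cases hx : x = a <;> simp [hx]
  have h := hv U hU i
  rw [Finset.sum_eq_single i] at h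
  · simp only [U, if_true, apply_ite Complex.ofReal, Complex.ofReal_neg, Complex.ofReal_one] at h
    rw [Finset.prod_ite, Finset.prod_const, Finset.prod_const_one, mul_one,
      mul_eq_right₀ hi] at h
    exact (neg_one_pow_eq_one_iff_even (by norm_num)).1 h
  · intro j _ hj
    obtain ⟨p, hp⟩ := Function.ne_iff.1 hj
    rw [Finset.prod_eq_zero (Finset.mem_univ p), zero_mul]
    simp [U, hp.symm]
  · simp

theorem unitAction_self {N l : ℕ} (a : Fin l) (v : (Fin N → Fin l) → ℂ) (i : Fin N → Fin l) :
    unitAction a a v i = (Finset.univ.filter fun p => i p = a).card * v i := by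
  rw [unitAction, Finset.card_eq_sum_ones, Finset.sum_filter]
  push_cast
  rw [Finset.sum_mul]
  refine Finset.sum_congr rfl fun p _ => ?_
  by_cases hp : i p = a
  · simp [← hp]
  · simp [hp]

theorem sum_star_unitAction_mul {N l : ℕ} (a b : Fin l) (v w : (Fin N → Fin l) → ℂ) :
    ∑ i, star (unitAction b a v i) * w i = ∑ i, star (v i) * unitAction a b w i := by
  simp only [unitAction, star_sum, Finset.sum_mul, Finset.mul_sum]
  rw [Finset.sum_comm, Finset.sum_comm (s := Finset.univ (α := Fin N → Fin l))]
  refine Finset.sum_congr rfl fun p _ => ?_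
  simp only [apply_ite star, star_zero, ite_mul, zero_mul, mul_ite, mul_zero]
  rw [← Finset.sum_filter, ← Finset.sum_filter]
  refine Finset.sum_bij' (fun i _ => Function.update i p a) (fun j _ => Function.update j p b)
    ?_ ?_ ?_ ?_ ?_ <;> simp +contextual [← eq_comm]

/-- On traceless tensors the squares of the matrix units add up to a scalar. -/
theorem sum_unitAction_unitAction {N l : ℕ} {v : (Fin N → Fin l) → ℂ} (hv : IsTraceless v)
    (i : Fin N → Fin l) :
    ∑ a, ∑ b, unitAction a b (unitAction a b v) i = N * v i := by
  have hpair : ∀ p q, ∑ a, ∑ b, (if i p = a then (if Function.update i p b q = a then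
      v (Function.update (Function.update i p b) q b) else 0) else 0) =
        if q = p then v i else 0 := by
    intro p q
    rw [Finset.sum_comm]
    simp only [Finset.sum_ite_eq, Finset.mem_univ, if_true]
    by_cases hq : q = p
    · subst hq
      simp
    · simp only [Function.update_of_ne hq, hq, if_false]
      by_cases hi : i q = i p
      · simpa [hi] using hv p q (Ne.symm hq) i
      · simp [hi]
  have hexp : ∀ a b, unitAction a b (unitAction a b v) i = ∑ p, ∑ q,
      (if i p = a then (if Function.update i p b q = a then
        v (Function.update (Function.update i p b) q b) else 0) else 0) := by
    intro a b
    rw [unitAction]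
    refine Finset.sum_congr rfl fun p _ => ?_
    by_cases hp : i p = a
    · simp [hp, unitAction]
    · simp [hp]
  calc ∑ a, ∑ b, unitAction a b (unitAction a b v) i
      = ∑ p, ∑ q, ∑ a, ∑ b, (if i p = a then (if Function.update i p b q = a then
        v (Function.update (Function.update i p b) q b) else 0) else 0) := by
        simp only [hexp]
        exact (Finset.sum_congr rfl fun a _ => Finset.sum_comm).trans
          (Finset.sum_comm.trans (Finset.sum_congr rfl fun p _ =>
            (Finset.sum_congr rfl fun a _ => Finset.sum_comm).trans Finset.sum_comm))
    _ = N * v i := by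
        simp only [hpair]
        simp

theorem sum_normSq_unitAction {N l : ℕ} {v : (Fin N → Fin l) → ℂ}
    (hv : v ∈ orthogonalInvariants N l) (ht : IsTraceless v) :
    ∑ a, ∑ b, ∑ i, Complex.normSq (unitAction a b v i) = N * ∑ i, Complex.normSq (v i) := by
  have hsq : ∀ z : ℂ, (Complex.normSq z : ℂ) = star z * z := fun z =>
    Complex.normSq_eq_conj_mul_self
  have : ((∑ a, ∑ b, ∑ i, Complex.normSq (unitAction a b v i) : ℝ) : ℂ) =
      ((N * ∑ i, Complex.normSq (v i) : ℝ) : ℂ) := by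
    push_cast
    simp only [hsq]
    calc ∑ a, ∑ b, ∑ i, star (unitAction a b v i) * unitAction a b v i
        = ∑ a, ∑ b, ∑ i, star (v i) * unitAction a b (unitAction a b v) i :=
          Finset.sum_congr rfl fun a _ => Finset.sum_congr rfl fun b _ => by
            rw [← sum_star_unitAction_mul a b v, unitAction_comm hv b a]
      _ = ∑ i, star (v i) * ∑ a, ∑ b, unitAction a b (unitAction a b v) i := by
          simp only [Finset.mul_sum]
          rw [Finset.sum_congr rfl fun a _ => Finset.sum_comm, Finset.sum_comm]
      _ = N * ∑ i, star (v i) * v i := by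
          simp only [sum_unitAction_unitAction ht, Finset.mul_sum]
          exact Finset.sum_congr rfl fun i _ => by ring
  exact_mod_cast this

theorem eq_zero_of_isTraceless {N l : ℕ} (hN : 0 < N) {v : (Fin N → Fin l) → ℂ}
    (hv : v ∈ orthogonalInvariants N l) (ht : IsTraceless v) : v = 0 := by
  have hle : ∀ a, ∀ i, 2 * ((Finset.univ.filter fun p => i p = a).card * Complex.normSq (v i)) ≤
      Complex.normSq (unitAction a a v i) := by
    intro a i
    rw [unitAction_self, map_mul, Complex.normSq_natCast]
    by_cases hi : v i = 0
    · simp [hi]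
    have hpos := Complex.normSq_nonneg (v i)
    have h2 : 2 * (Finset.univ.filter fun p => i p = a).card ≤
        (Finset.univ.filter fun p => i p = a).card * (Finset.univ.filter fun p => i p = a).card := by
      obtain ⟨m, hm⟩ := even_card_of_mem_orthogonalInvariants hv hi a
      rw [hm]
      rcases Nat.eq_zero_or_pos m with rfl | hm
      · simp
      · exact Nat.mul_le_mul_right _ (by omega)
    rw [← mul_assoc]
    exact mul_le_mul_of_nonneg_right (by exact_mod_cast h2) hpos
  have hcount : ∀ i : Fin N → Fin l,
      ∑ a, (((Finset.univ.filter fun p => i p = a).card : ℕ) : ℝ) = N := by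
    intro i
    have := Finset.card_eq_sum_card_fiberwise (f := i) (s := Finset.univ) (t := Finset.univ)
      (by simp)
    rw [Finset.card_univ, Fintype.card_fin] at this
    exact_mod_cast this.symm
  have hdiag : 2 * (N * ∑ i, Complex.normSq (v i)) ≤
      ∑ a, ∑ b, ∑ i, Complex.normSq (unitAction a b v i) :=
    calc 2 * (N * ∑ i, Complex.normSq (v i))
        = ∑ a, ∑ i, 2 * ((Finset.univ.filter fun p => i p = a).card * Complex.normSq (v i)) := by
          rw [Finset.sum_comm]
          simp only [← Finset.mul_sum, ← Finset.sum_mul, hcount]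
      _ ≤ ∑ a, ∑ i, Complex.normSq (unitAction a a v i) :=
          Finset.sum_le_sum fun a _ => Finset.sum_le_sum fun i _ => hle a i
      _ ≤ ∑ a, ∑ b, ∑ i, Complex.normSq (unitAction a b v i) :=
          Finset.sum_le_sum fun a _ => Finset.single_le_sum
            (f := fun b => ∑ i, Complex.normSq (unitAction a b v i))
            (fun b _ => Finset.sum_nonneg fun i _ => Complex.normSq_nonneg _) (Finset.mem_univ a)
  rw [sum_normSq_unitAction hv ht] at hdiag
  have hN' : (0 : ℝ) < N := by exact_mod_cast hN
  have hsum : ∑ i, Complex.normSq (v i) = 0 := by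
    refine le_antisymm ?_ (Finset.sum_nonneg fun i _ => Complex.normSq_nonneg _)
    by_contra hpos
    have := mul_pos hN' (not_le.1 hpos)
    linarith
  funext i
  exact Complex.normSq_eq_zero.1 ((Finset.sum_eq_zero_iff_of_nonneg
    fun i _ => Complex.normSq_nonneg _).1 hsum i (Finset.mem_univ i))

theorem eq_zero_of_orthogonalToMatchings {l : ℕ} : ∀ {N : ℕ} {v : (Fin N → Fin l) → ℂ},
    v ∈ orthogonalInvariants N l → OrthogonalToMatchings v → v = 0
  | 0, v, _, ho => by
    have h := ho 1 ⟨rfl, fun x => x.elim0⟩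
    funext i
    rw [Fintype.sum_unique] at h
    rw [Subsingleton.elim i default]
    simpa [matchingVec] using h
  | 1, v, hv, _ => eq_zero_of_isTraceless one_pos hv
      fun p q hpq => absurd (Subsingleton.elim p q) hpq
  | N + 2, v, hv, ho => eq_zero_of_isTraceless (Nat.succ_pos _) hv
      (isTraceless_of_contract_eq_zero fun e => eq_zero_of_orthogonalToMatchings
        (contract_mem_orthogonalInvariants (comp_perm_mem_orthogonalInvariants hv e))
        (ho.comp_perm e).contract)

/-- The first fundamental theorem in coordinates: matchings span the orthogonal invariants. -/
theorem orthogonalInvariants_le_span (N l : ℕ) :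
    orthogonalInvariants N l ≤ Submodule.span ℂ
      {v | ∃ τ : Equiv.Perm (Fin N), IsMatching τ ∧ matchingVec l τ = v} := by
  set W := Submodule.span ℂ
    {v : (Fin N → Fin l) → ℂ | ∃ τ : Equiv.Perm (Fin N), IsMatching τ ∧ matchingVec l τ = v}
    with hW
  have hWle : W ≤ orthogonalInvariants N l := by
    rw [hW, Submodule.span_le]
    rintro _ ⟨τ, hτ, rfl⟩
    exact matchingVec_mem_orthogonalInvariants l hτ
  intro v hv
  let e := WithLp.linearEquiv 2 ℂ ((Fin N → Fin l) → ℂ)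
  obtain ⟨w, hw, u, hu, huv⟩ := (W.comap e.toLinearMap).exists_add_mem_mem_orthogonal (e.symm v)
  have hv' : v = e w + e u := by rw [← map_add, ← huv, e.apply_symm_apply]
  have hu0 : e u = 0 := by
    refine eq_zero_of_orthogonalToMatchings ?_ fun τ hτ => ?_
    · have : e u = v - e w := by rw [hv', add_sub_cancel_left]
      rw [this]
      exact Submodule.sub_mem _ hv (hWle hw)
    · have hmem : e.symm (matchingVec l τ) ∈ W.comap e.toLinearMap := by
        rw [Submodule.mem_comap, LinearEquiv.coe_coe, e.apply_symm_apply]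
        exact Submodule.subset_span ⟨τ, hτ, rfl⟩
      have h := (Submodule.mem_orthogonal _ _).1 hu _ hmem
      rw [PiLp.inner_apply] at h
      rw [← h]
      refine Finset.sum_congr rfl fun i _ => ?_
      change matchingVec l τ i * u i = u i * star (matchingVec l τ i)
      rw [mul_comm]
      congr 1
      simp only [matchingVec]
      split_ifs <;> simp
  rw [hv', hu0, add_zero]
  exact hw

/-! ### Tensors and coordinates -/

/-- Coordinates of a tensor in the standard basis. -/
def tensorCoords (N l : ℕ) :
    (⨂[ℂ] _ : Fin N, (Fin l → ℂ)) ≃ₗ[ℂ] ((Fin N → Fin l) → ℂ) :=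
  (Basis.piTensorProduct fun _ : Fin N => Pi.basisFun ℂ (Fin l)).equivFun

theorem tensorCoords_tprod {N l : ℕ} (x : Fin N → Fin l → ℂ) (i : Fin N → Fin l) :
    tensorCoords N l (PiTensorProduct.tprod ℂ x) i = ∏ p, x p (i p) := by
  simp [tensorCoords]

theorem tensorCoords_vTau (n l : ℕ) (τ : Equiv.Perm (Fin (2 * n))) :
    tensorCoords (2 * n) l (vTau n l τ) = matchingVec l τ := by
  funext i
  rw [vTau, map_sum, Finset.sum_apply]
  simp only [tensorCoords_tprod, Pi.single_apply, Fintype.prod_ite_zero, Finset.prod_const_one,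
    ← funext_iff, matchingVec]
  simp [Finset.sum_ite_eq]

theorem tensorCoords_tpow {N l : ℕ} (u : Fin l → Fin l → ℂ)
    (v : ⨂[ℂ] _ : Fin N, (Fin l → ℂ)) (i : Fin N → Fin l) :
    tensorCoords N l (tpow N l (Matrix.of u) v) i =
      ∑ j, (∏ p, u (i p) (j p)) * tensorCoords N l v j := by
  induction v using PiTensorProduct.induction_on with
  | smul_tprod r x =>
    simp only [map_smul, Pi.smul_apply, smul_eq_mul, mul_left_comm _ r, ← Finset.mul_sum,
      tensorCoords_tprod, tpow, PiTensorProduct.map_tprod, ← Finset.prod_mul_distrib]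
    rw [← Fintype.piFinset_univ,
      ← Finset.prod_univ_sum (fun _ => Finset.univ) fun p c => u (i p) c * x p c]
    rfl
  | add v w hv hw =>
    simp only [map_add, Pi.add_apply, hv, hw, mul_add, Finset.sum_add_distrib]

theorem tensorCoords_mem_orthogonalInvariants_iff {N l : ℕ}
    (v : ⨂[ℂ] _ : Fin N, (Fin l → ℂ)) :
    tensorCoords N l v ∈ orthogonalInvariants N l ↔
      ∀ U : Matrix.orthogonalGroup (Fin l) ℝ,
        tpow N l ((U : Matrix (Fin l) (Fin l) ℝ).map (fun x : ℝ => (x : ℂ))) v = v := by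
  constructor
  · intro hv U
    refine (tensorCoords N l).injective (funext fun i => ?_)
    exact (tensorCoords_tpow _ v i).trans (hv (Matrix.of.symm U.1) U.2 i)
  · intro hv U hU i
    have h := congrFun (congrArg (tensorCoords N l) (hv ⟨Matrix.of U, hU⟩)) i
    exact (tensorCoords_tpow _ v i).symm.trans h

/-- The family `{v_τ : τ fixed-point-free involution of {1,…,2n}, L(τ) ≤ l}` is a basis
of the space `F_{2n}(O(l))` of tensors fixed by `U^{⊗2n}` for every real orthogonal `U`. -/
theorem vTau_basis_of_orthogonal_invariants (n l : ℕ) :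
    LinearIndependent ℂ
      (fun τ : {τ : Equiv.Perm (Fin (2 * n)) //
          τ * τ = 1 ∧ (∀ x, τ x ≠ x) ∧ lisLE τ l} => vTau n l τ.1) ∧
    (Submodule.span ℂ
        (Set.range (fun τ : {τ : Equiv.Perm (Fin (2 * n)) //
          τ * τ = 1 ∧ (∀ x, τ x ≠ x) ∧ lisLE τ l} => vTau n l τ.1)) :
      Set (⨂[ℂ] _ : Fin (2 * n), (Fin l → ℂ))) =
      {v | ∀ U : Matrix.orthogonalGroup (Fin l) ℝ,
        tpow (2 * n) l ((U : Matrix (Fin l) (Fin l) ℝ).map (fun x : ℝ => (x : ℂ))) v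
          = v} := by
  have hcomp : tensorCoords (2 * n) l ∘ (fun τ : {τ : Equiv.Perm (Fin (2 * n)) //
      τ * τ = 1 ∧ (∀ x, τ x ≠ x) ∧ lisLE τ l} => vTau n l τ.1) = fun τ => matchingVec l τ.1 :=
    funext fun τ => tensorCoords_vTau n l τ.1
  constructor
  · refine LinearIndependent.of_comp (tensorCoords (2 * n) l).toLinearMap ?_
    rw [LinearEquiv.coe_toLinearMap, hcomp]
    exact linearIndependent_matchingVec (2 * n) l
  · ext v
    have hmem : ∀ p : Submodule ℂ (⨂[ℂ] _ : Fin (2 * n), (Fin l → ℂ)), v ∈ p ↔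
        tensorCoords (2 * n) l v ∈ p.map (tensorCoords (2 * n) l).toLinearMap := fun p =>
      ⟨Submodule.mem_map_of_mem, fun ⟨w, hw, he⟩ => (tensorCoords (2 * n) l).injective he ▸ hw⟩
    rw [SetLike.mem_coe, Set.mem_ofPred_eq, ← tensorCoords_mem_orthogonalInvariants_iff,
      hmem, Submodule.map_span, ← Set.range_comp, LinearEquiv.coe_toLinearMap, hcomp]
    constructor
    · intro hv
      refine Submodule.span_le.2 ?_ hv
      rintro _ ⟨τ, rfl⟩
      exact matchingVec_mem_orthogonalInvariants l ⟨τ.2.1, τ.2.2.1⟩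
    · intro hv
      refine Submodule.span_le.2 ?_ (orthogonalInvariants_le_span (2 * n) l hv)
      rintro _ ⟨τ, hτ, rfl⟩
      exact matchingVec_mem_span hτ
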